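/- Let m ≥ 0 and t, s ≥ 1, and let G be a finite graph such that every prime induced subgraph of G has linear clique-width at most m. If lcw(G) ≥ (m + 2)(t + s), then G contains Q_t or Q̄_s as an induced subgraph. -/

import Mathlib

/-!
Let `K(a, b) = (m + 2)(a + b) + 1`. If `G[S]` contains neither `QGraph a` nor the complement of
`QGraph b`, then `G[S]` can be built with `K(a, b)` labels (`built_of_not_emb`); for `a = t - 1` and
`b = s - 1` this number is smaller than `(m + 2)(t + s)`.

The proof is by induction on `S`. A coarsest partition of `S` into at least two modules has a prime
quotient (`exists_prime_quot`), and the quotient is an induced subgraph of `G`, so it needs at most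
`m` labels. Call a set heavy if it contains both `QGraph (a - 1)` and the complement of
`QGraph (b - 1)`. By induction, classes that are not heavy need at most `K(a, b) - (m + 2)` labels.

If at most one class is heavy, build it first, collapse it to one reserved label, and then follow
the expression of the quotient; each other class is built when its vertex is introduced, with
labels of its own that are collapsed afterwards (`Built.inflate`).

If two classes are heavy, consider `Γ = G` or `Γ = Gᶜ` such that the two classes are not joined in
`Γ`. A third class that distinguishes them would give the universal graph of the next index in `Γ`
(`emb_succ`), so by primality there are only two classes and `Γ[S]` is disconnected
(`separated_of_two_heavy`). Let `C` be a connected component of `Γ[S]`. If `C` or `S \ C` is not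
heavy, the two parts are built one after the other (`Built.combine`). If both are heavy, then no
proper module `M` of `Γ[C]` is heavy, since `M`, a neighbor of `M` in `C`, and `S \ C` would again
give the universal graph of the next index. Hence in a prime quotient of `C` no class is heavy, `C`
needs at most `K(a, b) - 1` labels, and `Built.combine` applies (`built_of_separated`).
-/

open scoped Classical

/-! ### Linear clique-width -/

/-- A configuration reached while building a graph by a linear clique-width expression:
the set of vertices introduced so far, the adjacency relation created so far, and the
current labeling of the vertices by labels from `Fin k`. -/
structure LCWConfig (V : Type) (k : ℕ) where
  verts : Set V
  adj : V → V → Prop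
  lab : V → Fin k

/-- A single operation of a linear clique-width expression with `k` labels:
introduce a new vertex with some label, join all vertices labeled `i` to all vertices
labeled `j` (for `i ≠ j`), or relabel every vertex labeled `i` to `j` (for `i ≠ j`). -/
inductive LCWStep {V : Type} {k : ℕ} : LCWConfig V k → LCWConfig V k → Prop
  | intro (C : LCWConfig V k) (v : V) (hv : v ∉ C.verts) (c : Fin k) :
      LCWStep C ⟨insert v C.verts, C.adj, fun x => if x = v then c else C.lab x⟩
  | join (C : LCWConfig V k) (i j : Fin k) (hij : i ≠ j) :
      LCWStep C ⟨C.verts, fun x y => C.adj x y ∨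
        (x ∈ C.verts ∧ y ∈ C.verts ∧
          ((C.lab x = i ∧ C.lab y = j) ∨ (C.lab x = j ∧ C.lab y = i))), C.lab⟩
  | relabel (C : LCWConfig V k) (i j : Fin k) (hij : i ≠ j) :
      LCWStep C ⟨C.verts, C.adj, fun x => if C.lab x = i then j else C.lab x⟩

/-- `lcwLE G k` means that the graph `G` can be constructed by a linear clique-width
expression using (at most) `k` labels. -/
def lcwLE {V : Type} (G : SimpleGraph V) (k : ℕ) : Prop :=
  ∃ ℓ₀ ℓ : V → Fin k,
    Relation.ReflTransGen LCWStep
      (⟨∅, fun _ _ => False, ℓ₀⟩ : LCWConfig V k) ⟨Set.univ, G.Adj, ℓ⟩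

/-- The linear clique-width of a graph `G`: the least number of labels needed to
construct `G` by a linear clique-width expression. -/
noncomputable def lcw {V : Type} (G : SimpleGraph V) : ℕ :=
  sInf {k | lcwLE G k}

/-! ### Modules, prime graphs, inflations -/

/-- A module of a graph: every vertex outside `M` is adjacent to all of `M` or to none of it. -/
def IsModule {V : Type} (G : SimpleGraph V) (M : Set V) : Prop :=
  ∀ u ∈ M, ∀ v ∈ M, ∀ w ∉ M, (G.Adj w u ↔ G.Adj w v)

/-- A graph on at least two vertices is prime if all of its modules are trivial
(empty, singletons, or the whole vertex set). -/
def IsPrime {V : Type} (G : SimpleGraph V) : Prop :=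
  2 ≤ Nat.card V ∧ ∀ M : Set V, IsModule G M → M.Subsingleton ∨ M = Set.univ

/-- `IsInflation G H φ` says that `G` is an inflation of `H`, where `φ` maps each vertex of
`G` to the vertex of `H` whose module (namely the induced subgraph of `G` on the fiber
`φ ⁻¹ {v}`) contains it: fibers are nonempty, and for vertices in distinct fibers,
adjacency in `G` is equivalent to adjacency of the fibers' images in `H`. -/
def IsInflation {V ι : Type} (G : SimpleGraph V) (H : SimpleGraph ι) (φ : V → ι) : Prop :=
  Function.Surjective φ ∧
    ∀ x y : V, φ x ≠ φ y → (G.Adj x y ↔ H.Adj (φ x) (φ y))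

/-! ### Join, quasi-threshold graphs, universal quasi-threshold graphs -/

/-- The join of two graphs: their disjoint union together with all edges between the parts. -/
def GJoin {α β : Type} (G : SimpleGraph α) (H : SimpleGraph β) : SimpleGraph (α ⊕ β) :=
  (Gᶜ ⊕g Hᶜ)ᶜ

/-- Quasi-threshold graphs: those constructible (up to isomorphism) from `K₁` by repeatedly
taking joins with `K₁` and disjoint unions with other quasi-threshold graphs. -/
inductive IsQT : ∀ {V : Type}, SimpleGraph V → Prop
  | single : IsQT (⊥ : SimpleGraph (Fin 1))
  | joinK1 {V : Type} {G : SimpleGraph V} :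
      IsQT G → IsQT (GJoin (⊥ : SimpleGraph (Fin 1)) G)
  | union {V W : Type} {G : SimpleGraph V} {H : SimpleGraph W} :
      IsQT G → IsQT H → IsQT (G ⊕g H)
  | iso {V W : Type} {G : SimpleGraph V} {H : SimpleGraph W} :
      IsQT G → Nonempty (G ≃g H) → IsQT H

/-- Vertex set of the universal quasi-threshold graph `Q_{n+1}`. -/
def QVert : ℕ → Type
  | 0 => Fin 1
  | n + 1 => ((Fin 1) ⊕ QVert n) ⊕ QVert n

/-- The universal quasi-threshold graphs, indexed so that `QGraph (t - 1)` is `Q_t`: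
`Q_1 = K_1` and `Q_{t} = (K_1 ∗ Q_{t-1}) ⊎ Q_{t-1}` for `t ≥ 2`. -/
def QGraph : (n : ℕ) → SimpleGraph (QVert n)
  | 0 => ⊥
  | n + 1 => (GJoin (⊥ : SimpleGraph (Fin 1)) (QGraph n)) ⊕g (QGraph n)

/-! ### Hereditary classes of graphs -/

/-- A hereditary class of finite graphs, represented by the set of its members on the
vertex sets `Fin n`: it is closed under isomorphism and induced subgraphs, which together
amount to closure under induced-subgraph embeddings. -/
def Hereditary (C : ∀ n : ℕ, Set (SimpleGraph (Fin n))) : Prop :=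
  ∀ {m n : ℕ} (H : SimpleGraph (Fin m)) (G : SimpleGraph (Fin n)),
    Nonempty (H ↪g G) → G ∈ C n → H ∈ C m

/-! ### Expressions over arbitrary label types -/

/-- Labeled graphs that arise from linear clique-width expressions with an arbitrary label
type `Λ`: `Bd S E l` says that the graph with vertex set `S` and adjacency `E` can be built so
that the final labels are given by `l`. The labels outside `S` are irrelevant, as the
constructor `congr` records. -/
inductive Bd {V Λ : Type} : Set V → (V → V → Prop) → (V → Λ) → Prop
  | empty (l : V → Λ) : Bd ∅ (fun _ _ => False) l
  | intro {S : Set V} {E : V → V → Prop} {l : V → Λ} (h : Bd S E l) (v : V) (hv : v ∉ S)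
      (c : Λ) : Bd (insert v S) E (fun x => if x = v then c else l x)
  | join {S : Set V} {E : V → V → Prop} {l : V → Λ} (h : Bd S E l) (i j : Λ) (hij : i ≠ j) :
      Bd S (fun x y => E x y ∨ (x ∈ S ∧ y ∈ S ∧ ((l x = i ∧ l y = j) ∨ (l x = j ∧ l y = i)))) l
  | relabel {S : Set V} {E : V → V → Prop} {l : V → Λ} (h : Bd S E l) (i j : Λ) (hij : i ≠ j) :
      Bd S E (fun x => if l x = i then j else l x)
  | congr {S : Set V} {E : V → V → Prop} {l : V → Λ} (h : Bd S E l) (l' : V → Λ)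
      (hl : ∀ x ∈ S, l x = l' x) : Bd S E l'

namespace Bd

variable {V Λ Λ' : Type}

theorem cast {S S' : Set V} {E E' : V → V → Prop} {l l' : V → Λ} (h : Bd S E l)
    (hS : S = S') (hE : ∀ x y, E x y ↔ E' x y) (hl : ∀ x ∈ S, l x = l' x) : Bd S' E' l' := by
  subst hS
  have : E = E' := by
    funext x y
    exact propext (hE x y)
  subst this
  exact h.congr l' hl

theorem supp {S : Set V} {E : V → V → Prop} {l : V → Λ} (h : Bd S E l) :
    ∀ x y, E x y → x ∈ S ∧ y ∈ S := by
  induction h with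
  | empty l => intro x y h; exact h.elim
  | intro h v hv c ih => intro x y hE; exact ⟨Or.inr (ih x y hE).1, Or.inr (ih x y hE).2⟩
  | join h i j hij ih =>
    rintro x y (hE | hE)
    · exact ih x y hE
    · exact ⟨hE.1, hE.2.1⟩
  | relabel h i j hij ih => exact ih
  | congr h l' hl ih => exact ih

/-- An expression can be run next to an already built graph, provided its labels are embedded
into labels which the old vertices do not use. -/
theorem append {S T : Set V} {E F : V → V → Prop} {l : V → Λ} {k : V → Λ'} (f : Λ → Λ')
    (hf : Function.Injective f) (hT : Bd T F k) (hk : ∀ x ∈ T, ∀ c, k x ≠ f c)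
    (h : Bd S E l) (hST : ∀ x ∈ S, x ∉ T) :
    Bd (T ∪ S) (fun x y => F x y ∨ E x y) (fun x => if x ∈ T then k x else f (l x)) := by
  induction h with
  | empty l =>
    refine hT.cast (by simp) (by simp) ?_
    intro x hx; simp [hx]
  | @intro S E l h v hv c ih =>
    have ih := ih (fun x hx => hST x (Or.inr hx))
    have hvT := hST v (Or.inl rfl)
    refine (ih.intro v ?_ (f c)).cast ?_ (fun _ _ => Iff.rfl) ?_
    · simp [hv, hvT]
    · ext x; simp only [Set.mem_insert_iff, Set.mem_union]; tauto
    · intro x _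
      by_cases hx : x = v
      · subst hx; simp [hvT]
      · simp [hx]
  | @join S E l h i j hij ih =>
    have ih := ih hST
    refine (ih.join (f i) (f j) (fun e => hij (hf e))).cast rfl ?_ (fun _ _ => rfl)
    have hsupp := h.supp
    intro x y
    have hx := hST x
    have hy := hST y
    have hkx := hk x
    have hky := hk y
    have e1 : ∀ a b, f a = f b ↔ a = b := fun a b => hf.eq_iff
    by_cases hxT : x ∈ T <;> by_cases hyT : y ∈ T <;> simp_all [or_assoc] <;> tauto
  | @relabel S E l h i j hij ih =>
    have ih := ih hST
    refine (ih.relabel (f i) (f j) (fun e => hij (hf e))).cast rfl (fun _ _ => Iff.rfl) ?_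
    intro x _
    by_cases hxT : x ∈ T
    · simp [hxT, hk x hxT]
    · simp only [hxT, if_false, hf.eq_iff]
      split_ifs <;> rfl
  | @congr S E l h l' hl ih =>
    refine (ih hST).cast rfl (fun _ _ => Iff.rfl) ?_
    intro x hx
    by_cases hxT : x ∈ T
    · simp [hxT]
    · simp only [hxT, if_false]
      rw [hl x (hx.resolve_left hxT)]

theorem map {S : Set V} {E : V → V → Prop} {l : V → Λ} (h : Bd S E l) (f : Λ → Λ')
    (hf : Function.Injective f) : Bd S E (fun x => f (l x)) :=
  (append f hf (Bd.empty (fun x => f (l x))) (by simp) h (by simp)).cast (by simp) (by simp)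
    (by simp)

/-- All labels in `T` can be merged into `c`. -/
theorem collapse {S : Set V} {E : V → V → Prop} {l : V → Λ} (h : Bd S E l) (c : Λ)
    (T : Finset Λ) : Bd S E (fun x => if l x ∈ T then c else l x) := by
  induction T using Finset.induction_on with
  | empty => simpa using h
  | insert i T hi ih =>
    by_cases hic : i = c
    · refine ih.congr _ ?_
      intro x _
      simp only [Finset.mem_insert]
      split_ifs <;> simp_all
    · refine (ih.relabel i c hic).congr _ ?_
      intro x _
      simp only [Finset.mem_insert]
      split_ifs <;> simp_all

theorem collapse_all [Finite Λ] {S : Set V} {E : V → V → Prop} {l : V → Λ} (h : Bd S E l)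
    (c : Λ) : Bd S E (fun _ => c) := by
  have := Fintype.ofFinite Λ
  simpa using h.collapse c Finset.univ

/-- Expressions can be transported along an embedding of the vertex type. -/
theorem mapVert {W : Type} {S : Set W} {E : W → W → Prop} {l : W → Λ} (h : Bd S E l)
    (g : W → V) (hg : Function.Injective g) (d : Λ) :
    Bd (g '' S) (fun x y => ∃ a b, E a b ∧ g a = x ∧ g b = y)
      (Function.extend g l (fun _ => d)) := by
  induction h with
  | empty l => exact (Bd.empty (Function.extend g l (fun _ => d))).cast (by simp) (by simp) (by simp)
  | @intro S E l h v hv c ih =>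
    refine (ih.intro (g v) ?_ c).cast (Set.image_insert_eq).symm (fun _ _ => Iff.rfl) ?_
    · rintro ⟨w, hw, e⟩
      exact hv (hg e ▸ hw)
    · rintro x hx
      rw [← Set.image_insert_eq] at hx
      obtain ⟨w, hw, rfl⟩ := hx
      simp [hg.extend_apply, hg.eq_iff]
  | @join S E l h i j hij ih =>
    refine (ih.join i j hij).cast rfl ?_ (fun _ _ => rfl)
    intro x y
    constructor
    · rintro (⟨a, b, hE, rfl, rfl⟩ | ⟨⟨a, ha, rfl⟩, ⟨b, hb, rfl⟩, hl⟩)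
      · exact ⟨a, b, Or.inl hE, rfl, rfl⟩
      · simp only [hg.extend_apply] at hl
        exact ⟨a, b, Or.inr ⟨ha, hb, hl⟩, rfl, rfl⟩
    · rintro ⟨a, b, hE | ⟨ha, hb, hl⟩, rfl, rfl⟩
      · exact Or.inl ⟨a, b, hE, rfl, rfl⟩
      · refine Or.inr ⟨⟨a, ha, rfl⟩, ⟨b, hb, rfl⟩, ?_⟩
        simpa only [hg.extend_apply] using hl
  | @relabel S E l h i j hij ih =>
    refine (ih.relabel i j hij).cast rfl (fun _ _ => Iff.rfl) ?_
    rintro _ ⟨w, hw, rfl⟩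
    simp [hg.extend_apply]
  | @congr S E l h l' hl ih =>
    refine ih.cast rfl (fun _ _ => Iff.rfl) ?_
    rintro _ ⟨w, hw, rfl⟩
    simp [hg.extend_apply, hl w hw]

theorem of_run {k : ℕ} {C D : LCWConfig V k} (h : Relation.ReflTransGen LCWStep C D)
    (hC : Bd C.verts C.adj C.lab) : Bd D.verts D.adj D.lab := by
  induction h with
  | refl => exact hC
  | tail _ hs ih =>
    cases hs with
    | intro v hv c => exact (ih.intro v hv c)
    | join i j hij => exact (ih.join i j hij)
    | relabel i j hij =>
      refine (ih.relabel i j hij).cast rfl (fun _ _ => Iff.rfl) ?_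
      intro x _
      dsimp only
      split_ifs <;> rfl

theorem to_run {k : ℕ} {S : Set V} {E : V → V → Prop} {l : V → Fin k} (h : Bd S E l) :
    ∃ ℓ₀ l' : V → Fin k, (∀ x ∈ S, l x = l' x) ∧
      Relation.ReflTransGen LCWStep
        (⟨∅, fun _ _ => False, ℓ₀⟩ : LCWConfig V k) ⟨S, E, l'⟩ := by
  induction h with
  | empty l => exact ⟨l, l, fun _ _ => rfl, .refl⟩
  | @intro S E l h v hv c ih =>
    obtain ⟨ℓ₀, l', hl, hr⟩ := ih
    refine ⟨ℓ₀, _, ?_, hr.tail (LCWStep.intro _ v hv c)⟩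
    rintro x (rfl | hx)
    · simp
    · simp [hl x hx]
  | @join S E l h i j hij ih =>
    obtain ⟨ℓ₀, l', hl, hr⟩ := ih
    refine ⟨ℓ₀, l', hl, ?_⟩
    have := hr.tail (LCWStep.join _ i j hij)
    convert this using 3
    rename_i x
    funext y
    refine propext (or_congr Iff.rfl ?_)
    constructor
    · rintro ⟨hx, hy, h⟩
      rw [hl x hx, hl y hy] at h
      exact ⟨hx, hy, h⟩
    · rintro ⟨hx, hy, h⟩
      dsimp only at hx hy h
      rw [← hl x hx, ← hl y hy] at h
      exact ⟨hx, hy, h⟩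
  | @relabel S E l h i j hij ih =>
    obtain ⟨ℓ₀, l', hl, hr⟩ := ih
    refine ⟨ℓ₀, _, ?_, hr.tail (LCWStep.relabel _ i j hij)⟩
    intro x hx
    simp [hl x hx]
  | @congr S E l h l' hl ih =>
    obtain ⟨ℓ₀, l'', hl', hr⟩ := ih
    exact ⟨ℓ₀, l'', fun x hx => (hl x hx).symm.trans (hl' x hx), hr⟩

end Bd

/-! ### Building induced subgraphs -/

/-- `G[S]` can be built by a linear clique-width expression with `k` labels. -/
def Built {V : Type} (G : SimpleGraph V) (S : Set V) (k : ℕ) : Prop :=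
  ∃ l : V → Fin k, Bd S (fun x y => x ∈ S ∧ y ∈ S ∧ G.Adj x y) l

section Built

variable {V : Type} {G : SimpleGraph V}

theorem Built.of_bd {Λ : Type} [Finite Λ] {S : Set V} {k : ℕ} {l : V → Λ}
    (h : Bd S (fun x y => x ∈ S ∧ y ∈ S ∧ G.Adj x y) l) (hk : Nat.card Λ ≤ k) :
    Built G S k :=
  ⟨_, h.map (fun c => Fin.castLE hk (Finite.equivFin Λ c))
    (fun _ _ e => (Finite.equivFin Λ).injective (Fin.castLE_injective hk e))⟩

theorem Built.toBd {Λ : Type} [Finite Λ] {S : Set V} {k : ℕ} (h : Built G S k)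
    (hk : k ≤ Nat.card Λ) : ∃ l : V → Λ, Bd S (fun x y => x ∈ S ∧ y ∈ S ∧ G.Adj x y) l := by
  obtain ⟨l, hl⟩ := h
  exact ⟨_, hl.map (fun c => (Finite.equivFin Λ).symm (Fin.castLE hk c))
    (fun _ _ e => Fin.castLE_injective hk ((Finite.equivFin Λ).symm.injective e))⟩

theorem Built.mono {S : Set V} {k k' : ℕ} (h : Built G S k) (hk : k ≤ k') : Built G S k' := by
  obtain ⟨l, hl⟩ := h
  exact Built.of_bd hl (by simpa using hk)

theorem Built.subsingleton {S : Set V} (hS : S.Subsingleton) {k : ℕ} (hk : 1 ≤ k) :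
    Built G S k := by
  refine ⟨fun _ => ⟨0, hk⟩, ?_⟩
  rcases hS.eq_empty_or_singleton with rfl | ⟨v, rfl⟩
  · exact (Bd.empty (fun _ => ⟨0, hk⟩)).cast rfl (by simp) (by simp)
  · refine ((Bd.empty (fun _ => ⟨0, hk⟩)).intro v (by simp) ⟨0, hk⟩).cast (by simp) ?_ (by simp)
    intro x y
    simp only [Set.mem_singleton_iff, false_iff]
    rintro ⟨rfl, rfl, h⟩
    exact G.loopless.irrefl _ h

theorem lcw_le_of_built {k : ℕ} (h : Built G Set.univ k) : lcw G ≤ k := by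
  obtain ⟨l, hl⟩ := h
  refine Nat.sInf_le ?_
  obtain ⟨ℓ₀, ℓ, _, hr⟩ := (hl.cast (E' := G.Adj) rfl (by simp) (fun _ _ => rfl)).to_run
  exact ⟨ℓ₀, ℓ, hr⟩

/-- Giving every vertex its own label builds any finite graph, so `lcw` is an infimum over a
nonempty set. -/
theorem lcwLE_lcw [Finite V] (G : SimpleGraph V) : lcwLE G (lcw G) := by
  have := Fintype.ofFinite V
  have key : ∀ S : Finset V,
      Bd (↑S : Set V) (fun x y => x ∈ S ∧ y ∈ S ∧ G.Adj x y) (fun x => x) := by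
    intro S
    induction S using Finset.induction_on with
    | empty => exact (Bd.empty (fun x => x)).cast (by simp) (by simp) (by simp)
    | insert v S hv ih =>
      have h1 : Bd (↑(insert v S) : Set V) (fun x y => x ∈ S ∧ y ∈ S ∧ G.Adj x y)
          (fun x => x) := by
        refine (ih.intro v (by simpa using hv) v).cast (by simp) (fun _ _ => Iff.rfl) ?_
        intro x _
        by_cases hx : x = v <;> simp [hx]
      have h2 : ∀ T : Finset V, T ⊆ S → Bd (↑(insert v S) : Set V)
          (fun x y => (x ∈ S ∧ y ∈ S ∧ G.Adj x y) ∨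
            (x = v ∧ y ∈ T ∧ G.Adj x y) ∨ (y = v ∧ x ∈ T ∧ G.Adj x y)) (fun x => x) := by
        intro T
        induction T using Finset.induction_on with
        | empty => intro _; exact h1.cast rfl (by simp) (fun _ _ => rfl)
        | insert w T hw ihT =>
          intro hT
          have hwS : w ∈ S := hT (by simp)
          have ihT := ihT (fun x hx => hT (by simp [hx]))
          by_cases hvw : G.Adj v w
          · refine (ihT.join v w hvw.ne).cast rfl ?_ (fun _ _ => rfl)
            intro x y
            have := hvw.symm
            simp only [Finset.coe_insert, Set.mem_insert_iff, Finset.mem_coe, Finset.mem_insert]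
            grind
          · refine ihT.cast rfl ?_ (fun _ _ => rfl)
            intro x y
            have : ¬ G.Adj w v := fun h => hvw h.symm
            simp only [Finset.mem_insert]
            grind
      refine (h2 S (Finset.Subset.refl _)).cast rfl ?_ (fun _ _ => rfl)
      intro x y
      have := G.loopless.irrefl v
      simp only [Finset.mem_insert]
      grind
  have hU : Built G Set.univ (Nat.card V) :=
    Built.of_bd (l := fun x : V => x) ((key Finset.univ).cast (by simp) (by simp) (by simp)) le_rfl
  refine Nat.sInf_mem (s := {k | lcwLE G k}) ⟨Nat.card V, ?_⟩
  obtain ⟨l, hl⟩ := hU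
  obtain ⟨ℓ₀, ℓ, _, hr⟩ := (hl.cast (E' := G.Adj) rfl (by simp) (fun _ _ => rfl)).to_run
  exact ⟨ℓ₀, ℓ, hr⟩

theorem built_of_lcw_induce [Finite V] {A : Set V} {k : ℕ} (hA : A.Nonempty)
    (h : lcw (G.induce A) ≤ k) : Built G A k := by
  obtain ⟨ℓ₀, ℓ, hr⟩ := lcwLE_lcw (G.induce A)
  have hb := Bd.of_run hr (Bd.empty _)
  obtain ⟨a, ha⟩ := hA
  have := hb.mapVert (Subtype.val : A → V) Subtype.val_injective (ℓ ⟨a, ha⟩)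
  refine Built.of_bd (this.cast (by simp) ?_ (fun _ _ => rfl)) (by simpa using h)
  intro x y
  constructor
  · rintro ⟨a, b, h, rfl, rfl⟩
    exact ⟨a.2, b.2, h⟩
  · rintro ⟨hx, hy, h⟩
    exact ⟨⟨x, hx⟩, ⟨y, hy⟩, h, rfl, rfl⟩

/-- Disjoint union or join of two parts: the second part is built first and then kept in a single
label while the first one is built with the `k` remaining labels. -/
theorem Built.combine {A B : Set V} {k : ℕ} (hk : 1 ≤ k) (hAB : ∀ x ∈ A, x ∉ B)
    (e : Prop) (he : ∀ x ∈ A, ∀ y ∈ B, (G.Adj x y ↔ e)) (hA : Built G A k)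
    (hB : Built G B (k + 1)) : Built G (B ∪ A) (k + 1) := by
  obtain ⟨lA, hA⟩ := hA
  obtain ⟨lB, hB⟩ := hB.toBd (Λ := Option (Fin k)) (by simp)
  have h1 := Bd.append (Λ' := Option (Fin k)) some (Option.some_injective _)
    (hB.collapse_all none) (by simp) hA hAB
  have h2 := h1.collapse (some ⟨0, hk⟩) (Finset.univ.image some)
  by_cases hE : e
  · refine Built.of_bd (Λ := Option (Fin k))
      ((h2.join (some ⟨0, hk⟩) none (by simp)).cast rfl ?_ (fun _ _ => rfl)) (by simp)
    intro x y
    have e1 := he x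
    have e2 := he y
    have h3 := hAB x
    have h4 := hAB y
    have h5 := G.adj_comm x y
    by_cases hx : x ∈ B <;> by_cases hy : y ∈ B <;> simp_all
    · tauto
    · tauto
  · refine Built.of_bd (Λ := Option (Fin k)) (h2.cast rfl ?_ (fun _ _ => rfl)) (by simp)
    intro x y
    have e1 := he x
    have e2 := he y
    have h3 := hAB x
    have h4 := hAB y
    have h5 := G.adj_comm x y
    by_cases hx : x ∈ B <;> by_cases hy : y ∈ B <;> simp_all
    tauto

end Built

/-! ### Inflations and prime quotients -/

section Inflation

variable {V : Type} {G : SimpleGraph V}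

/-- The inflation argument, following an expression for the quotient. The class of `v₀` is built
first and parked in the label `inr none`; whenever the quotient's expression introduces another
vertex `v`, the class of `v` is built with the labels `inr (some _)` and then collapsed to one
label. -/
theorem Bd.inflate {Λ Λ₂ : Type} [Finite Λ₂] {S A : Set V} {φ : V → V} {v₀ : V}
    {l₀ : V → Λ ⊕ Option Λ₂}
    (h₀ : Bd {x | x ∈ S ∧ φ x = v₀} (fun x y => x ∈ {x | x ∈ S ∧ φ x = v₀} ∧
      y ∈ {x | x ∈ S ∧ φ x = v₀} ∧ G.Adj x y) l₀)
    [Finite Λ]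
    (hcls : ∀ v ∈ A, v ≠ v₀ → ∃ l : V → Λ₂, Bd {x | x ∈ S ∧ φ x = v}
      (fun x y => x ∈ {x | x ∈ S ∧ φ x = v} ∧ y ∈ {x | x ∈ S ∧ φ x = v} ∧ G.Adj x y) l)
    {T : Set V} {E : V → V → Prop} {l : V → Λ} (h : Bd T E l) (hT : T ⊆ A) :
    Bd {x | x ∈ S ∧ (φ x ∈ T ∨ φ x = v₀)}
      (fun x y => x ∈ S ∧ y ∈ S ∧ ((φ x = φ y ∧ (φ x ∈ T ∨ φ x = v₀) ∧ G.Adj x y) ∨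
        (φ x ≠ φ y ∧ E (φ x) (φ y))))
      (fun x => if φ x ∈ T then (Sum.inl (l (φ x)) : Λ ⊕ Option Λ₂) else Sum.inr none) := by
  induction h with
  | empty l =>
    refine (h₀.collapse_all (Sum.inr none)).cast (by simp) ?_ (by simp)
    intro x y
    simp only [Set.mem_ofPred_eq, Set.mem_empty_iff_false]
    grind
  | @intro T E l h v hv c ih =>
    have ih := ih (fun x hx => hT (Or.inr hx))
    have hsupp := h.supp
    by_cases hv₀ : v = v₀
    · refine (ih.relabel (Sum.inr none) (Sum.inl c) (by simp)).cast ?_ ?_ ?_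
      · ext x; simp only [Set.mem_ofPred_eq, Set.mem_insert_iff]; grind
      · intro x y; simp only [Set.mem_insert_iff]; grind
      · rintro x ⟨hx, hx'⟩
        simp only [Set.mem_insert_iff]
        by_cases h1 : φ x = v
        · simp [h1, hv]
        · have : φ x ∈ T := by grind
          simp [this, h1]
    · obtain ⟨lv, hlv⟩ := hcls v (hT (Or.inl rfl)) hv₀
      have := Fintype.ofFinite Λ₂
      have h1 := Bd.append (fun c : Λ₂ => (Sum.inr (some c) : Λ ⊕ Option Λ₂))
        (fun a b e => by simpa using e) ih
        (by intro x _ c; split_ifs <;> simp) hlv (by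
          simp only [Set.mem_ofPred_eq]; grind)
      refine (h1.collapse (Sum.inl c)
        (Finset.univ.image (fun c : Λ₂ => (Sum.inr (some c) : Λ ⊕ Option Λ₂)))).cast ?_ ?_ ?_
      · ext x; simp only [Set.mem_ofPred_eq, Set.mem_insert_iff, Set.mem_union]; grind
      · intro x y
        have := hsupp (φ x) (φ y)
        simp only [Set.mem_ofPred_eq, Set.mem_insert_iff]; grind
      · rintro x hx
        simp only [Set.mem_union, Set.mem_ofPred_eq] at hx
        simp only [Set.mem_insert_iff, Set.mem_ofPred_eq]
        rcases hx with ⟨hS, hx | hx⟩ | ⟨hS, hx⟩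
        · have : φ x ≠ v := fun e => hv (e ▸ hx)
          simp [hS, hx, this]
        · by_cases h2 : φ x ∈ T
          · have : φ x ≠ v := fun e => hv (e ▸ h2)
            simp [hS, h2, this]
          · have h3 : v₀ ∉ T := hx ▸ h2
            have h4 : ¬ v₀ = v := fun e => hv₀ e.symm
            simp [hS, hx, h3, h4]
        · have : ¬ (v = v₀) := hv₀
          simp [hS, hx, hv, this]
  | @join T E l h i j hij ih =>
    refine ((ih hT).join (Sum.inl i) (Sum.inl j) (by simpa using hij)).cast rfl ?_ (fun _ _ => rfl)
    intro x y
    by_cases hx : φ x ∈ T <;> by_cases hy : φ y ∈ T <;> simp [hx, hy] <;> grind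
  | @relabel T E l h i j hij ih =>
    refine ((ih hT).relabel (Sum.inl i) (Sum.inl j) (by simpa using hij)).cast rfl
      (fun _ _ => Iff.rfl) ?_
    intro x _
    by_cases hx : φ x ∈ T <;> simp [hx]
    split_ifs <;> rfl
  | @congr T E l h l' hl ih =>
    refine (ih hT).cast rfl (fun _ _ => Iff.rfl) ?_
    intro x _
    by_cases hx : φ x ∈ T
    · simp [hx, hl _ hx]
    · simp [hx]

/-- `φ` retracts `S` onto a transversal `A` of a partition of `S` into modules of `G[S]`, the
classes being the fibers of `φ` on `S`; thus `G[A]` is the quotient. -/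
structure IsQuot (G : SimpleGraph V) (S A : Set V) (φ : V → V) : Prop where
  sub : A ⊆ S
  maps : ∀ x ∈ S, φ x ∈ A
  fix : ∀ a ∈ A, φ a = a
  adj : ∀ x ∈ S, ∀ y ∈ S, φ x ≠ φ y → (G.Adj x y ↔ G.Adj (φ x) (φ y))

/-- The class of `v` in the partition of `S` into the fibers of `φ`. -/
def cls (S : Set V) (φ : V → V) (v : V) : Set V := {x | x ∈ S ∧ φ x = v}

/-- If the quotient needs `q` labels, one class needs at most `q + 1 + L` and all others at most `L`,
then `q + 1 + L` labels suffice for the whole graph. -/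
theorem Built.inflate {S A : Set V} {φ : V → V} (hq : IsQuot G S A φ) {q L : ℕ} {v₀ : V}
    (hA : Built G A q) (h₀ : Built G (cls S φ v₀) (q + 1 + L))
    (hcls : ∀ v ∈ A, v ≠ v₀ → Built G (cls S φ v) L) : Built G S (q + 1 + L) := by
  obtain ⟨l, hl⟩ := hA
  obtain ⟨l₀, hl₀⟩ := h₀.toBd (Λ := Fin q ⊕ Option (Fin L)) (by simp; omega)
  have := Bd.inflate (Λ₂ := Fin L) hl₀ hcls hl (le_refl A)
  refine Built.of_bd (Λ := Fin q ⊕ Option (Fin L)) (this.cast ?_ ?_ (fun _ _ => rfl))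
    (by simp; omega)
  · ext x
    have := hq.maps x
    simp only [Set.mem_ofPred_eq]
    tauto
  · intro x y
    have h1 := hq.maps x
    have h2 := hq.maps y
    have h3 := hq.adj x
    constructor
    · rintro ⟨hx, hy, ⟨_, _, h⟩ | ⟨hne, _, _, h⟩⟩
      · exact ⟨hx, hy, h⟩
      · exact ⟨hx, hy, (h3 hx y hy hne).2 h⟩
    · rintro ⟨hx, hy, h⟩
      refine ⟨hx, hy, ?_⟩
      by_cases he : φ x = φ y
      · exact Or.inl ⟨he, Or.inl (h1 hx), h⟩
      · exact Or.inr ⟨he, h1 hx, h2 hy, (h3 hx y hy he).1 h⟩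

theorem IsQuot.cls_module {S A : Set V} {φ : V → V} (hq : IsQuot G S A φ) {v x y z : V}
    (hx : x ∈ S) (hxv : φ x ≠ v) (hy : y ∈ cls S φ v) (hz : z ∈ cls S φ v) :
    G.Adj x y ↔ G.Adj x z := by
  obtain ⟨hy, hyv⟩ := hy
  obtain ⟨hz, hzv⟩ := hz
  rw [hq.adj x hx y hy (by rw [hyv]; exact hxv), hq.adj x hx z hz (by rw [hzv]; exact hxv),
    hyv, hzv]

theorem IsQuot.cls_ssubset {S A : Set V} {φ : V → V} (hq : IsQuot G S A φ)
    (hA : A.Nontrivial) (v : V) : cls S φ v ⊂ S := by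
  obtain ⟨w, hw, hne⟩ := hA.exists_ne v
  refine ⟨fun x hx => hx.1, fun h => hne ?_⟩
  rw [← hq.fix w hw]
  exact (h (hq.sub hw)).2

/-- A coarsest partition into at least two modules has a prime quotient: a nontrivial module of
the quotient could be merged to a single class. -/
theorem exists_prime_quot [Finite V] (G : SimpleGraph V) {S : Set V} (hS : S.Nontrivial) :
    ∃ A φ, IsQuot G S A φ ∧ A.Nontrivial ∧ IsPrime (G.induce A) := by
  have hex : ∃ n : ℕ, ∃ A : Set V, ∃ φ, IsQuot G S A φ ∧ A.Nontrivial ∧ A.ncard = n :=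
    ⟨_, S, fun x => x, ⟨le_rfl, fun _ h => h, fun _ _ => rfl, fun _ _ _ _ _ => Iff.rfl⟩, hS, rfl⟩
  obtain ⟨A, φ, hq, hA, hn⟩ := Nat.find_spec hex
  refine ⟨A, φ, hq, hA, ?_, ?_⟩
  · have h := (Set.one_lt_ncard_iff_nontrivial (s := A)).2 hA
    rw [Nat.card_coe_set_eq]
    exact h
  intro N hN
  by_contra hcon
  push Not at hcon
  obtain ⟨hN1, hN2⟩ := hcon
  obtain ⟨p, hp, p', hp', hpp⟩ := hN1
  obtain ⟨w, hw⟩ := (Set.ne_univ_iff_exists_notMem N).1 hN2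
  set M : Set V := Subtype.val '' N with hM
  have hMA : M ⊆ A := by rintro _ ⟨x, _, rfl⟩; exact x.2
  have hpM : (p : V) ∈ M := ⟨p, hp, rfl⟩
  have hp'M : (p' : V) ∈ M := ⟨p', hp', rfl⟩
  have hpp' : (p : V) ≠ p' := fun e => hpp (Subtype.ext e)
  have hwM : (w : V) ∉ M := by
    rintro ⟨x, hx, e⟩
    exact hw (Subtype.ext e ▸ hx)
  have hmod : ∀ u ∈ M, ∀ x ∈ A, x ∉ M → (G.Adj x u ↔ G.Adj x p) := by
    rintro _ ⟨u, hu, rfl⟩ x hx hxM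
    exact hN u hu p hp ⟨x, hx⟩ (fun h => hxM ⟨_, h, rfl⟩)
  have hq' : IsQuot G S {x | x ∈ A ∧ (x ∈ M → x = p)}
      (fun x => if φ x ∈ M then (p : V) else φ x) := by
    refine ⟨fun x hx => hq.sub hx.1, ?_, ?_, ?_⟩
    · intro x hx
      have := hq.maps x hx
      by_cases h : φ x ∈ M
      · simp [h, p.2]
      · simp [h, this]
    · rintro a ⟨ha, ha'⟩
      have := hq.fix a ha
      by_cases h : a ∈ M <;> simp_all
    · intro x hx y hy hne
      have h1 := hq.adj x hx y hy
      have h2 := hq.maps x hx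
      have h3 := hq.maps y hy
      by_cases hxM : φ x ∈ M <;> by_cases hyM : φ y ∈ M
      · simp [hxM, hyM] at hne
      · simp only [hxM, hyM, if_true, if_false] at hne ⊢
        rw [h1 (fun e => hyM (e ▸ hxM)), G.adj_comm, hmod _ hxM _ h3 hyM, G.adj_comm]
      · simp only [hxM, hyM, if_true, if_false] at hne ⊢
        rw [h1 (fun e => hxM (e ▸ hyM)), hmod _ hyM _ h2 hxM]
      · simp only [hxM, hyM, if_false] at hne ⊢
        exact h1 hne
  refine Nat.find_min hex (m := ({x | x ∈ A ∧ (x ∈ M → x = p)} : Set V).ncard) ?_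
    ⟨_, _, hq', ?_, rfl⟩
  · rw [← hn]
    refine Set.ncard_lt_ncard ⟨fun x hx => hx.1, fun h => hpp' ?_⟩ (Set.toFinite _)
    exact ((h (hMA hp'M)).2 hp'M).symm
  · exact ⟨p, ⟨p.2, fun _ => rfl⟩, w, ⟨w.2, fun h => (hwM h).elim⟩, fun e => hwM (e ▸ hpM)⟩

end Inflation

/-! ### Embeddings of universal quasi-threshold graphs -/

section Universal

variable {V : Type}

/-- `H` is isomorphic to an induced subgraph of `G[S]`. -/
def Emb {W : Type} (H : SimpleGraph W) (G : SimpleGraph V) (S : Set V) : Prop :=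
  ∃ f : W → V, Function.Injective f ∧ (∀ x, f x ∈ S) ∧ ∀ x y, H.Adj x y ↔ G.Adj (f x) (f y)

theorem Emb.mono {W : Type} {H : SimpleGraph W} {G : SimpleGraph V} {S T : Set V}
    (h : Emb H G S) (hST : S ⊆ T) : Emb H G T := by
  obtain ⟨f, hf, hS, hadj⟩ := h
  exact ⟨f, hf, fun x => hST (hS x), hadj⟩

theorem QVert.nonempty (n : ℕ) : Nonempty (QVert n) := by
  induction n with
  | zero => exact ⟨(0 : Fin 1)⟩
  | succ n ih => exact ih.map Sum.inr

theorem Emb.nonempty {n : ℕ} {G : SimpleGraph V} {S : Set V} (h : Emb (QGraph n) G S) :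
    S.Nonempty := by
  obtain ⟨f, _, hS, _⟩ := h
  obtain ⟨q⟩ := QVert.nonempty n
  exact ⟨f q, hS q⟩

theorem emb_zero {G : SimpleGraph V} {S : Set V} (h : S.Nonempty) : Emb (QGraph 0) G S := by
  obtain ⟨v, hv⟩ := h
  refine ⟨fun _ => v, fun x y _ => ?_, fun _ => hv, fun x y => ?_⟩
  · exact Subsingleton.elim (α := Fin 1) x y
  · simp [QGraph]

/-- A vertex joined to all of one copy of the universal graph and to nothing of a second copy,
with no edges between the copies, completes the next universal graph. -/
theorem emb_succ {n : ℕ} {G : SimpleGraph V} {S M N : Set V} {u : V}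
    (hM : Emb (QGraph n) G M) (hN : Emb (QGraph n) G N) (hMS : M ⊆ S) (hNS : N ⊆ S) (hu : u ∈ S)
    (huN : u ∉ N) (hMN : ∀ x ∈ M, ∀ y ∈ N, x ≠ y ∧ ¬ G.Adj x y)
    (hadjM : ∀ x ∈ M, G.Adj u x) (hadjN : ∀ x ∈ N, ¬ G.Adj u x) : Emb (QGraph (n + 1)) G S := by
  obtain ⟨f, hf, hfM, hfa⟩ := hM
  obtain ⟨g, hg, hgN, hga⟩ := hN
  have h1 : ∀ x, G.Adj u (f x) := fun x => hadjM _ (hfM x)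
  have h2 : ∀ x, G.Adj (f x) u := fun x => (h1 x).symm
  have h3 : ∀ x, ¬ G.Adj u (g x) := fun x => hadjN _ (hgN x)
  have h4 : ∀ x, ¬ G.Adj (g x) u := fun x h => h3 x h.symm
  have h5 : ∀ x y, ¬ G.Adj (f x) (g y) := fun x y => (hMN _ (hfM x) _ (hgN y)).2
  have h6 : ∀ x y, ¬ G.Adj (g y) (f x) := fun x y h => h5 x y h.symm
  have h7 : ∀ x y, f x ≠ g y := fun x y => (hMN _ (hfM x) _ (hgN y)).1
  have h8 : ∀ x, u ≠ f x := fun x => (h1 x).ne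
  have h9 : ∀ x, u ≠ g x := fun x e => huN (e ▸ hgN x)
  refine ⟨Sum.elim (Sum.elim (fun _ => u) f) g, ?_, ?_, ?_⟩
  · rintro ((x | x) | x) ((y | y) | y) h
    · exact congrArg (Sum.inl ∘ Sum.inl) (Subsingleton.elim x y)
    · exact (h8 _ h).elim
    · exact (h9 _ h).elim
    · exact (h8 _ h.symm).elim
    · exact congrArg (Sum.inl ∘ Sum.inr) (hf h)
    · exact (h7 _ _ h).elim
    · exact (h9 _ h.symm).elim
    · exact (h7 _ _ h.symm).elim
    · exact congrArg Sum.inr (hg h)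
  · rintro ((x | x) | x)
    · exact hu
    · exact hMS (hfM x)
    · exact hNS (hgN x)
  · have hne : ∀ x y, (QGraph n).Adj x y → x ≠ y := fun x y h => h.ne
    rintro ((x | x) | x) ((y | y) | y)
    · have : x = y := Subsingleton.elim x y
      simp [QGraph, GJoin, this]
    · simp [QGraph, GJoin, h1]
    · simp [QGraph, GJoin, h3]
    · simp [QGraph, GJoin, h2]
    · have := hne x y
      simp [QGraph, GJoin, ← hfa]
      tauto
    · simp [QGraph, GJoin, h5]
    · simp [QGraph, GJoin, h4]
    · simp [QGraph, GJoin, h6]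
    · simp [QGraph, GJoin, ← hga]

end Universal

/-! ### The bound on linear clique-width -/

section Main

variable {V : Type} {G : SimpleGraph V}

/-- The case where `S` splits into two nonempty parts without `Γ`-edges between them, for
`Γ = G` (disjoint union) or `Γ = Gᶜ` (join). One part is taken minimal, so connected in `Γ`. If
both parts satisfy `P`, hence contain the universal graph of index `n`, then no proper module of
the connected part satisfies `P`: together with a neighbor outside of it and with the other part
it would form the universal graph of index `n + 1`. -/
theorem built_of_separated [Finite V] {m L n : ℕ}
    (hprime : ∀ A : Set V, IsPrime (G.induce A) → lcw (G.induce A) ≤ m)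
    {Γ : SimpleGraph V} (hΓ : Γ = G ∨ Γ = Gᶜ) {S : Set V}
    (hno : ¬ Emb (QGraph (n + 1)) Γ S) (P : Set V → Prop)
    (hP : ∀ M, P M → Emb (QGraph n) Γ M) (hL : 1 ≤ L)
    (hlow : ∀ M, M ⊂ S → ¬ P M → Built G M L) (hhigh : ∀ M, M ⊂ S → Built G M (L + m + 2))
    (hsep : ∃ C : Set V, C.Nonempty ∧ C ⊂ S ∧ ∀ x ∈ C, ∀ y ∈ S, y ∉ C → ¬ Γ.Adj x y) :
    Built G S (L + m + 2) := by
  obtain ⟨C, ⟨hCne, hCS, hCsep⟩, hmin⟩ := WellFounded.has_min (wellFounded_lt (α := Set V))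
    {C : Set V | C.Nonempty ∧ C ⊂ S ∧ ∀ x ∈ C, ∀ y ∈ S, y ∉ C → ¬ Γ.Adj x y} hsep
  obtain ⟨e, he⟩ : ∃ e : Prop, ∀ x y, x ≠ y → ¬ Γ.Adj x y → (G.Adj x y ↔ e) := by
    rcases hΓ with rfl | rfl
    · exact ⟨False, by simp⟩
    · refine ⟨True, fun x y hxy h => ?_⟩
      simpa [hxy] using h
  have hmodΓ : ∀ x y z, x ≠ y → x ≠ z → (G.Adj x y ↔ G.Adj x z) → (Γ.Adj x y ↔ Γ.Adj x z) := by
    intro x y z hxy hxz h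
    rcases hΓ with rfl | rfl
    · exact h
    · simp [hxy, hxz, h]
  have hDS : S \ C ⊂ S := by
    obtain ⟨c, hc⟩ := hCne
    exact ⟨Set.sdiff_subset, fun h => (h (hCS.1 hc)).2 hc⟩
  have hu1 : (S \ C) ∪ C = S := Set.sdiff_union_of_subset hCS.1
  have hu2 : C ∪ (S \ C) = S := Set.union_sdiff_cancel hCS.1
  have hadj : ∀ x ∈ C, ∀ y ∈ S \ C, (G.Adj x y ↔ e) := fun x hx y hy =>
    he x y (fun h => hy.2 (h ▸ hx)) (hCsep x hx y hy.1 hy.2)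
  have hCsmall : Built G C (L + m + 1) → Built G S (L + m + 2) := by
    intro h
    rw [← hu1]
    exact Built.combine (by omega) (fun x hx hx' => hx'.2 hx) e hadj h (hhigh _ hDS)
  by_cases hPC : P C
  swap
  · exact hCsmall ((hlow C hCS hPC).mono (by omega))
  by_cases hPD : P (S \ C)
  swap
  · rw [← hu2]
    refine Built.combine (by omega) (fun x hx => hx.2) e ?_
      ((hlow _ hDS hPD).mono (by omega)) (hhigh C hCS)
    intro x hx y hy
    rw [G.adj_comm]
    exact hadj y hy x hx
  apply hCsmall
  rcases C.subsingleton_or_nontrivial with hC1 | hC2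
  · exact Built.subsingleton hC1 (by omega)
  obtain ⟨A, φ, hq, hA, hAp⟩ := exists_prime_quot G hC2
  have hlight : ∀ v ∈ A, Built G (cls C φ v) L := by
    intro v hv
    have hMC := hq.cls_ssubset hA v
    refine hlow _ (hMC.trans hCS) (fun hPM => hno ?_)
    have hMne := (hP _ hPM).nonempty
    -- By minimality of `C`, some vertex outside the class is joined to it.
    obtain ⟨x, hx, u, hu, huM, hxu⟩ : ∃ x ∈ cls C φ v, ∃ u ∈ S, u ∉ cls C φ v ∧ Γ.Adj x u := by
      by_contra hcon
      push Not at hcon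
      exact hmin (cls C φ v) ⟨hMne, hMC.trans hCS, hcon⟩ hMC
    have huC : u ∈ C := by
      by_contra huC
      exact hCsep x hx.1 u hu huC hxu
    refine emb_succ (hP _ hPM) (hP _ hPD) (hMC.trans hCS).1 hDS.1 hu (fun h => h.2 huC) ?_ ?_ ?_
    · intro y hy z hz
      exact ⟨fun h => hz.2 (h ▸ hy.1), hCsep y hy.1 z hz.1 hz.2⟩
    · intro y hy
      refine (hmodΓ u x y ?_ ?_ ?_).1 hxu.symm
      · rintro rfl; exact huM hx
      · rintro rfl; exact huM hy
      · exact hq.cls_module huC (fun h => huM ⟨huC, h⟩) hx hy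
    · intro z hz
      exact hCsep u huC z hz.1 hz.2
  obtain ⟨v₀, hv₀⟩ := hA.nonempty
  refine (Built.inflate hq (v₀ := v₀) (built_of_lcw_induce hA.nonempty (hprime A hAp))
    ((hlight v₀ hv₀).mono (by omega)) (fun v hv _ => hlight v hv)).mono (by omega)

/-- Suppose two classes of a partition with prime quotient both contain the universal graph of
index `n` in `Γ` and are not joined in `Γ`, while `Γ[S]` omits the universal graph of index `n + 1`.
Then they are the only classes, so `Γ[S]` is disconnected: otherwise, by primality, a third class
distinguishes them and completes the universal graph of index `n + 1`. -/
theorem separated_of_two_heavy {S A : Set V} {φ : V → V} (hq : IsQuot G S A φ)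
    (hAp : IsPrime (G.induce A)) {n : ℕ} {Γ : SimpleGraph V} (hΓ : Γ = G ∨ Γ = Gᶜ)
    (hno : ¬ Emb (QGraph (n + 1)) Γ S) {v w : V} (hv : v ∈ A) (hw : w ∈ A) (hvw : v ≠ w)
    (hvE : Emb (QGraph n) Γ (cls S φ v)) (hwE : Emb (QGraph n) Γ (cls S φ w))
    (hnadj : ¬ Γ.Adj v w) :
    ∃ C : Set V, C.Nonempty ∧ C ⊂ S ∧ ∀ x ∈ C, ∀ y ∈ S, y ∉ C → ¬ Γ.Adj x y := by
  have hadjΓ : ∀ x ∈ S, ∀ y ∈ S, φ x ≠ φ y → (Γ.Adj x y ↔ Γ.Adj (φ x) (φ y)) := by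
    intro x hx y hy hne
    have hxy : x ≠ y := fun h => hne (h ▸ rfl)
    have := hq.adj x hx y hy hne
    rcases hΓ with rfl | rfl
    · exact this
    · simp [hxy, hne, this]
  -- A third class joined to exactly one of the two yields the next universal graph.
  have hthird : ∀ v w : V, v ∈ A → w ∈ A → v ≠ w → ¬ Γ.Adj v w → Emb (QGraph n) Γ (cls S φ v) →
      Emb (QGraph n) Γ (cls S φ w) → ∀ u ∈ A, u ≠ v → u ≠ w → Γ.Adj u v → ¬ Γ.Adj u w →
      False := by
    intro v w hv hw hvw hnadj hvE hwE u hu huv huw h1 h2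
    refine hno (emb_succ (u := u) hvE hwE (fun x hx => hx.1) (fun x hx => hx.1) (hq.sub hu)
      ?_ ?_ ?_ ?_)
    · rintro ⟨_, h⟩
      exact huw ((hq.fix u hu).symm.trans h)
    · rintro x ⟨hx, hxv⟩ y ⟨hy, hyw⟩
      have hne : φ x ≠ φ y := by rw [hxv, hyw]; exact hvw
      refine ⟨fun h => hne (h ▸ rfl), ?_⟩
      rw [hadjΓ x hx y hy hne, hxv, hyw]
      exact hnadj
    · rintro x ⟨hx, hxv⟩
      rw [hadjΓ u (hq.sub hu) x hx (by rw [hq.fix u hu, hxv]; exact huv), hq.fix u hu, hxv]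
      exact h1
    · rintro x ⟨hx, hxw⟩
      rw [hadjΓ u (hq.sub hu) x hx (by rw [hq.fix u hu, hxw]; exact huw), hq.fix u hu, hxw]
      exact h2
  have hΓmod : ∀ x y z, x ≠ y → x ≠ z → (Γ.Adj x y ↔ Γ.Adj x z) → (G.Adj x y ↔ G.Adj x z) := by
    intro x y z hxy hxz h
    rcases hΓ with rfl | rfl
    · exact h
    · simp [hxy, hxz] at h
      tauto
  have hpair : ∀ u ∈ A, u ≠ v → u ≠ w → (G.Adj u v ↔ G.Adj u w) := by
    intro u hu huv huw
    refine hΓmod u v w huv huw ⟨fun h => ?_, fun h => ?_⟩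
    · by_contra h'
      exact hthird v w hv hw hvw hnadj hvE hwE u hu huv huw h h'
    · by_contra h'
      exact hthird w v hw hv hvw.symm (fun h => hnadj h.symm) hwE hvE u hu huw huv h h'
  have hmod : IsModule (G.induce A) {⟨v, hv⟩, ⟨w, hw⟩} := by
    rintro x hx y hy ⟨u, hu⟩ hz
    simp only [Set.mem_insert_iff, Set.mem_singleton_iff, not_or, Subtype.mk.injEq] at hx hy hz
    have := hpair u hu hz.1 hz.2
    rcases hx with rfl | rfl <;> rcases hy with rfl | rfl <;> simp [this]
  have hAeq : ∀ u ∈ A, u = v ∨ u = w := by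
    intro u hu
    rcases hAp.2 _ hmod with h | h
    · have := h (Set.mem_insert _ _) (Set.mem_insert_of_mem _ rfl)
      exact (hvw (Subtype.mk.inj this)).elim
    · have : (⟨u, hu⟩ : A) ∈ ({⟨v, hv⟩, ⟨w, hw⟩} : Set A) := h ▸ Set.mem_univ _
      simpa using this
  refine ⟨cls S φ v, hvE.nonempty, hq.cls_ssubset ⟨v, hv, w, hw, hvw⟩ v, ?_⟩
  rintro x ⟨hx, hxv⟩ y hy hyv
  have hyw : φ y = w := (hAeq _ (hq.maps y hy)).resolve_left (fun h => hyv ⟨hy, h⟩)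
  rw [hadjΓ x hx y hy (by rw [hxv, hyw]; exact hvw), hxv, hyw]
  exact hnadj

/-- The main bound, by induction on `S`. With `L` the bound for index sum one smaller, `P M` says that
`M` is heavy, i.e. contains both of the universal graphs of the next smaller indices; modules that
are not heavy satisfy the bound `L`. At most one heavy class of the prime quotient is absorbed by
building it first, and two heavy classes force a disjoint union or a join. -/
theorem built_of_not_emb [Finite V] {m : ℕ}
    (hprime : ∀ A : Set V, IsPrime (G.induce A) → lcw (G.induce A) ≤ m) (S : Set V) :
    ∀ a b : ℕ, ¬ Emb (QGraph a) G S → ¬ Emb (QGraph b) Gᶜ S →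
      Built G S ((m + 2) * (a + b) + 1) := by
  induction S using WellFoundedLT.induction with
  | ind S ih =>
  intro a b ha hb
  rcases S.subsingleton_or_nontrivial with hS | hS
  · exact Built.subsingleton hS (by omega)
  obtain _ | a := a
  · exact (ha (emb_zero hS.nonempty)).elim
  obtain _ | b := b
  · exact (hb (emb_zero hS.nonempty)).elim
  set L := (m + 2) * (a + b + 1) + 1 with hLdef
  have hK : (m + 2) * (a + 1 + (b + 1)) + 1 = L + m + 2 := by rw [hLdef]; ring
  rw [hK]
  let P : Set V → Prop := fun M => Emb (QGraph a) G M ∧ Emb (QGraph b) Gᶜ M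
  have hhigh : ∀ M, M ⊂ S → Built G M (L + m + 2) := by
    intro M hM
    rw [← hK]
    exact ih M hM _ _ (fun h => ha (h.mono hM.1)) (fun h => hb (h.mono hM.1))
  have hlow : ∀ M, M ⊂ S → ¬ P M → Built G M L := by
    intro M hM hPM
    by_cases h : Emb (QGraph a) G M
    · refine (ih M hM (a + 1) b (fun h => ha (h.mono hM.1)) (fun h' => hPM ⟨h, h'⟩)).mono
        (le_of_eq ?_)
      rw [hLdef]; ring
    · refine (ih M hM a (b + 1) h (fun h => hb (h.mono hM.1))).mono (le_of_eq ?_)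
      rw [hLdef]; ring
  have hL : 1 ≤ L := by omega
  obtain ⟨A, φ, hq, hA, hAp⟩ := exists_prime_quot G hS
  by_cases hone : ∃ v₀, ∀ v ∈ A, v ≠ v₀ → ¬ P (cls S φ v)
  · obtain ⟨v₀, hv₀⟩ := hone
    have hAm := (built_of_lcw_induce hA.nonempty (hprime A hAp)).mono (Nat.le_succ m)
    exact (Built.inflate hq (v₀ := v₀) (L := L) hAm
      ((hhigh _ (hq.cls_ssubset hA v₀)).mono (by omega))
      (fun v hv hne => hlow _ (hq.cls_ssubset hA v) (hv₀ v hv hne))).mono (by omega)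
  · push Not at hone
    obtain ⟨v, hv, -, hPv⟩ := hone hS.nonempty.some
    obtain ⟨w, hw, hwv, hPw⟩ := hone v
    by_cases hadj : G.Adj v w
    · exact built_of_separated hprime (Or.inr rfl) hb P (fun _ h => h.2) hL hlow hhigh
        (separated_of_two_heavy hq hAp (Or.inr rfl) hb hv hw hwv.symm hPv.2 hPw.2
          (by simp [hadj]))
    · exact built_of_separated hprime (Or.inl rfl) ha P (fun _ h => h.1) hL hlow hhigh
        (separated_of_two_heavy hq hAp (Or.inl rfl) ha hv hw hwv.symm hPv.1 hPw.1 hadj)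

end Main

/-- Let `m ≥ 0` and `t, s ≥ 1`, and let `G` be a finite graph all of whose
prime induced subgraphs have linear clique-width at most `m`. If
`lcw(G) ≥ (m + 2)(t + s)`, then `G` contains `Q_t` or `Q̄_s` as an induced subgraph
(here `QGraph (t - 1)` is `Q_t`). -/
theorem lcw_large_contains_universal {V : Type} [Finite V] (G : SimpleGraph V)
    (m t s : ℕ) (ht : 1 ≤ t) (hs : 1 ≤ s)
    (hprime : ∀ A : Set V, IsPrime (G.induce A) → lcw (G.induce A) ≤ m)
    (hlcw : (m + 2) * (t + s) ≤ lcw G) :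
    Nonempty (QGraph (t - 1) ↪g G) ∨ Nonempty ((QGraph (s - 1))ᶜ ↪g G) := by
  by_contra hcon
  push Not at hcon
  obtain ⟨hQ, hQ'⟩ := hcon
  have h := lcw_le_of_built (built_of_not_emb hprime Set.univ (t - 1) (s - 1) ?_ ?_)
  · obtain ⟨t, rfl⟩ := Nat.exists_eq_add_of_le' ht
    obtain ⟨s, rfl⟩ := Nat.exists_eq_add_of_le' hs
    simp only [Nat.add_sub_cancel] at h
    nlinarith
  · rintro ⟨f, hf, -, hadj⟩
    exact hQ.false ⟨⟨f, hf⟩, (hadj _ _).symm⟩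
  · rintro ⟨f, hf, -, hadj⟩
    refine hQ'.false ⟨⟨f, hf⟩, fun {x y} => ?_⟩
    have := hadj x y
    simp only [SimpleGraph.compl_adj, hf.ne_iff] at this
    by_cases hxy : x = y
    · subst hxy
      simp
    · simp only [Function.Embedding.coeFn_mk, SimpleGraph.compl_adj]
      tauto
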